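/- arXiv:1205.5322 — 2 statements merged into one kernel-verified Lean document; each statement's English description precedes it below -/
import Mathlib

section
/- Let 0 < α < 1 and let ψ : ℝ → ℝ be a 2π-periodic continuously differentiable function whose derivative ψ′ is α-Hölder continuous. Let Φ be continuous on the closed unit disk in ℝ², harmonic on the open unit disk D, and satisfy Φ(cos θ, sin θ) = ψ(θ) for all θ ∈ ℝ. Then there is a constant C > 0, depending only on α, ‖ψ‖_∞, ‖ψ′‖_∞ and the α-Hölder seminorm of ψ′, such that ‖∇Φ(x)‖ ≤ C for every x ∈ D; in particular the gradient of the harmonic extension of C^{1,α} boundary data is uniformly bounded on the disk. -/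
open scoped BigOperators

/-- The Laplacian of a scalar function on `ℝ²`, `ΔΦ = Σᵢ ∂²Φ/∂xᵢ²`. -/
noncomputable def laplacian2 (f : EuclideanSpace ℝ (Fin 2) → ℝ)
    (x : EuclideanSpace ℝ (Fin 2)) : ℝ :=
  ∑ i : Fin 2,
    fderiv ℝ (fun y => fderiv ℝ f y (EuclideanSpace.single i 1)) x (EuclideanSpace.single i 1)

/-- The point `(cos θ, sin θ)` of the unit circle in `ℝ²`. -/
noncomputable def circlePoint (θ : ℝ) : EuclideanSpace ℝ (Fin 2) :=
  (EuclideanSpace.equiv (Fin 2) ℝ).symm ![Real.cos θ, Real.sin θ]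

open Complex Metric

lemma gb_ne (w : ℂ) (hw : ‖w‖ < 1) (θ : ℝ) : circleMap 0 1 θ - w ≠ 0 := by
  intro h
  have h1 : ‖circleMap 0 1 θ‖ = 1 := by simp
  rw [sub_eq_zero.1 h] at h1
  linarith

lemma gb_int_inv (w : ℂ) (hw : ‖w‖ < 1) :
    ∫ θ in (0 : ℝ)..2 * Real.pi, (circleMap 0 1 θ - w)⁻¹ = 0 := by
  have h1 : Real.circleAverage (fun z : ℂ => z / (1 - (starRingEnd ℂ) w * z)) 0 1 = 0 := by
    have : DiffContOnCl ℂ (fun z : ℂ => z / (1 - (starRingEnd ℂ) w * z)) (ball 0 |1|) := by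
      apply DifferentiableOn.diffContOnCl
      rw [abs_one, closure_ball _ one_ne_zero]
      intro z hz
      apply DifferentiableAt.differentiableWithinAt
      have hne : 1 - (starRingEnd ℂ) w * z ≠ 0 := by
        intro h
        have h2 : ‖(starRingEnd ℂ) w * z‖ = 1 := by
          rw [← sub_eq_zero.1 h]; simp
        rw [norm_mul, RCLike.norm_conj] at h2
        have : ‖z‖ ≤ 1 := by simpa using hz
        nlinarith [norm_nonneg w, norm_nonneg z]
      fun_prop (disch := assumption)
    rw [this.circleAverage]; simp
  rw [Real.circleAverage_def] at h1
  have h2 := (smul_eq_zero.1 h1).resolve_left (by positivity)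
  have h3 : (fun θ : ℝ => (circleMap 0 1 θ - w)⁻¹) =
      fun θ : ℝ => Complex.conjCLE
        (circleMap 0 1 θ / (1 - (starRingEnd ℂ) w * circleMap 0 1 θ)) := by
    funext θ
    have e1 : (starRingEnd ℂ) (circleMap 0 1 θ) * circleMap 0 1 θ = 1 := by
      rw [mul_comm, Complex.mul_conj, Complex.normSq_eq_norm_sq]; simp
    have hz := gb_ne w hw θ
    have hc : circleMap 0 1 θ ≠ 0 := by simp
    simp only [Complex.conjCLE_apply, map_div₀, map_sub, map_one, map_mul, Complex.conj_conj]
    have hcc : (starRingEnd ℂ) (circleMap 0 1 θ) ≠ 0 := by simp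
    have : 1 - w * (starRingEnd ℂ) (circleMap 0 1 θ)
        = (starRingEnd ℂ) (circleMap 0 1 θ) * (circleMap 0 1 θ - w) := by
      rw [mul_sub, e1]; ring
    rw [this]
    field_simp
  rw [h3]
  rw [intervalIntegral.integral_of_le (by positivity)] at h2 ⊢
  rw [ContinuousLinearEquiv.integral_comp_comm, h2, map_zero]

lemma gb_lower (w : ℂ) (hw : ‖w‖ < 1) :
    ∃ φ : ℝ, ∀ t : ℝ, |t| ≤ Real.pi → |t| ≤ Real.pi * ‖circleMap 0 1 (t + φ) - w‖ := by
  refine ⟨arg w, fun t ht => ?_⟩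
  have hpi := Real.pi_pos
  set φ := arg w
  set u := circleMap 0 1 φ with hu
  have hwu : w = ‖w‖ * u := by
    rw [hu, circleMap_zero, ofReal_one, one_mul, norm_mul_exp_arg_mul_I]
  have hun : ‖u‖ = 1 := by simp [hu]
  have h1 : ‖u - w‖ = 1 - ‖w‖ := by
    have : u - w = ((1 - ‖w‖ : ℝ) : ℂ) * u := by
      conv_lhs => rw [hwu]
      push_cast; ring
    rw [this, norm_mul, hun, mul_one, Complex.norm_real, Real.norm_of_nonneg (by linarith)]
  set ζ := circleMap 0 1 (t + φ) with hζ
  have hζn : ‖ζ‖ = 1 := by simp [hζ]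
  have h2 : 1 - ‖w‖ ≤ ‖ζ - w‖ := by
    have := norm_sub_norm_le ζ w
    rwa [hζn] at this
  have h3 : ‖ζ - u‖ ≤ 2 * ‖ζ - w‖ := by
    have : ‖ζ - u‖ ≤ ‖ζ - w‖ + ‖u - w‖ := by
      have := norm_sub_le (ζ - w) (u - w)
      simpa using this
    linarith
  have h4 : ‖ζ - u‖ = 2 * |Real.sin (t / 2)| := by
    have : ζ - u = (cexp (I * t) - 1) * u := by
      rw [hζ, hu]
      simp only [circleMap_zero, ofReal_one, one_mul]
      rw [sub_mul, ← Complex.exp_add]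
      push_cast
      ring_nf
    rw [this, norm_mul, hun, mul_one, norm_exp_I_mul_ofReal_sub_one]
    simp
  have h5 := Real.mul_abs_le_abs_sin (x := t / 2) (by rw [abs_div, abs_two]; linarith)
  rw [abs_div, abs_two] at h5
  have h6 : 2 / Real.pi * (|t| / 2) ≤ ‖ζ - w‖ := by linarith
  have h7 : 2 / Real.pi * (|t| / 2) = |t| / Real.pi := by field_simp
  rw [h7, div_le_iff₀ hpi] at h6
  linarith

lemma gb_abs_rpow (α : ℝ) (hα : 0 < α) :
    IntervalIntegrable (fun t : ℝ => |t| ^ (α - 1)) MeasureTheory.volume (-Real.pi) Real.pi ∧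
    ∫ t in (-Real.pi)..Real.pi, |t| ^ (α - 1) = 2 * (Real.pi ^ α / α) := by
  have hpi := Real.pi_pos
  have a1 : IntervalIntegrable (fun t : ℝ => |t| ^ (α - 1)) MeasureTheory.volume 0 Real.pi := by
    have := intervalIntegral.intervalIntegrable_rpow' (a := 0) (b := Real.pi) (r := α - 1)
      (by linarith)
    refine this.congr ?_
    intro x hx
    rw [Set.uIoc_of_le hpi.le] at hx
    simp only [abs_of_pos hx.1]
  have a2 : IntervalIntegrable (fun t : ℝ => |t| ^ (α - 1)) MeasureTheory.volume (-Real.pi) 0 := by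
    have := (IntervalIntegrable.iff_comp_neg (a := 0) (b := Real.pi)).1 a1
    simpa using this.symm
  have i1 : ∫ t in (0 : ℝ)..Real.pi, |t| ^ (α - 1) = Real.pi ^ α / α := by
    have : ∫ t in (0 : ℝ)..Real.pi, |t| ^ (α - 1) = ∫ t in (0 : ℝ)..Real.pi, t ^ (α - 1) := by
      apply intervalIntegral.integral_congr
      intro x hx
      rw [Set.uIcc_of_le hpi.le] at hx
      simp only [abs_of_nonneg hx.1]
    rw [this, integral_rpow (Or.inl (by linarith))]
    simp [Real.zero_rpow hα.ne']
  have i2 : ∫ t in (-Real.pi)..(0 : ℝ), |t| ^ (α - 1) = Real.pi ^ α / α := by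
    rw [← i1]
    have := intervalIntegral.integral_comp_neg (a := 0) (b := Real.pi)
      (fun t : ℝ => |t| ^ (α - 1))
    simpa using this.symm
  refine ⟨a2.trans a1, ?_⟩
  rw [← intervalIntegral.integral_add_adjacent_intervals a2 a1, i1, i2]
  ring

lemma gb_periodic_deriv (ψ : ℝ → ℝ) (c : ℝ) (h : Function.Periodic ψ c) :
    Function.Periodic (deriv ψ) c := by
  intro x
  rw [← deriv_comp_add_const]
  congr 1
  funext y
  exact h y

lemma gb_key (α : ℝ) (hα : 0 < α) (M : ℝ) (ψ : ℝ → ℝ)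
    (hper : Function.Periodic ψ (2 * Real.pi)) (hC : ContDiff ℝ 1 ψ)
    (hH : ∀ s t : ℝ, |deriv ψ s - deriv ψ t| ≤ M * |s - t| ^ α)
    (F : ℂ → ℂ) (hF : ∀ θ : ℝ, F (circleMap 0 1 θ) = (ψ θ : ℂ)) (w : ℂ) (hw : ‖w‖ < 1) :
    ‖Real.circleAverage (fun ζ => (2 * ζ / (ζ - w) ^ 2) • F ζ) 0 1‖
      ≤ 2 * M * Real.pi ^ α / α := by
  have hpi := Real.pi_pos
  have hM : 0 ≤ M := by
    have := (abs_nonneg _).trans (hH 1 0)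
    simpa using this
  obtain ⟨φ, hφ⟩ := gb_lower w hw
  have hne := gb_ne w hw
  have hcd : Continuous (deriv ψ) := hC.continuous_deriv le_rfl
  have hcψ : Continuous ψ := hC.continuous
  have hcc : Continuous (fun θ : ℝ => circleMap 0 1 θ) := continuous_circleMap 0 1
  set a := deriv ψ φ with ha
  -- integration by parts
  have hinv : Continuous (fun θ : ℝ => (circleMap 0 1 θ - w)⁻¹) :=
    (hcc.sub continuous_const).inv₀ hne
  have c1 : Continuous (fun θ : ℝ => ((deriv ψ θ : ℝ) : ℂ) * (circleMap 0 1 θ - w)⁻¹) :=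
    (Complex.continuous_ofReal.comp hcd).mul hinv
  have c2 : Continuous (fun θ : ℝ => 2 * circleMap 0 1 θ / (circleMap 0 1 θ - w) ^ 2 * (ψ θ : ℂ)) :=
    ((continuous_const.mul hcc).div ((hcc.sub continuous_const).pow 2)
      (fun θ => pow_ne_zero 2 (hne θ))).mul (Complex.continuous_ofReal.comp hcψ)
  have ibp : ∫ θ in (0 : ℝ)..2 * Real.pi,
      (((deriv ψ θ : ℝ) : ℂ) * (circleMap 0 1 θ - w)⁻¹
        - (I / 2) * (2 * circleMap 0 1 θ / (circleMap 0 1 θ - w) ^ 2 * (ψ θ : ℂ))) = 0 := by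
    rw [intervalIntegral.integral_eq_sub_of_hasDerivAt
      (f := fun θ : ℝ => (ψ θ : ℂ) * (circleMap 0 1 θ - w)⁻¹)]
    · have h1 : ψ (2 * Real.pi) = ψ 0 := by simpa using hper 0
      have h2 : circleMap 0 1 (2 * Real.pi) = circleMap 0 1 0 := by
        simpa using periodic_circleMap 0 1 0
      simp only [h1, h2, sub_self]
    · intro θ _
      have d1 : HasDerivAt (fun θ : ℝ => (ψ θ : ℂ)) ((deriv ψ θ : ℝ) : ℂ) θ :=
        ((hC.differentiable one_ne_zero) θ).hasDerivAt.ofReal_comp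
      have d2 := ((hasDerivAt_circleMap 0 1 θ).sub_const w).fun_inv (hne θ)
      refine (d1.mul d2).congr_deriv ?_
      have := hne θ
      field_simp
      ring
    · exact (c1.sub (continuous_const.mul c2)).intervalIntegrable _ _
  have c3 : Continuous (fun θ : ℝ => (I / 2) *
      (2 * circleMap 0 1 θ / (circleMap 0 1 θ - w) ^ 2 * (ψ θ : ℂ))) := continuous_const.mul c2
  have c4 : Continuous (fun θ : ℝ => (a : ℂ) * (circleMap 0 1 θ - w)⁻¹) :=
    continuous_const.mul hinv
  rw [intervalIntegral.integral_sub (c1.intervalIntegrable _ _) (c3.intervalIntegrable _ _),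
    intervalIntegral.integral_const_mul] at ibp
  set G : ℝ → ℂ := fun θ => (((deriv ψ θ - a : ℝ)) : ℂ) * (circleMap 0 1 θ - w)⁻¹ with hG
  have hGint : ∫ θ in (0 : ℝ)..2 * Real.pi, G θ
      = ∫ θ in (0 : ℝ)..2 * Real.pi, ((deriv ψ θ : ℝ) : ℂ) * (circleMap 0 1 θ - w)⁻¹ := by
    have : G = fun θ => ((deriv ψ θ : ℝ) : ℂ) * (circleMap 0 1 θ - w)⁻¹
        - (a : ℂ) * (circleMap 0 1 θ - w)⁻¹ := by
      funext θ; simp only [hG]; push_cast; ring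
    rw [this, intervalIntegral.integral_sub (c1.intervalIntegrable _ _)
      (c4.intervalIntegrable _ _),
      intervalIntegral.integral_const_mul, gb_int_inv w hw]
    ring
  have hGper : Function.Periodic G (2 * Real.pi) := by
    intro θ
    simp only [hG]
    rw [gb_periodic_deriv ψ _ hper θ, periodic_circleMap 0 1 θ]
  have hshift : ∫ θ in (0 : ℝ)..2 * Real.pi, G θ
      = ∫ t in (-Real.pi)..Real.pi, G (t + φ) := by
    have h1 := hGper.intervalIntegral_add_eq 0 (-Real.pi + φ)
    rw [zero_add] at h1
    rw [h1, intervalIntegral.integral_comp_add_right]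
    congr 1
    ring
  have hbound : ‖∫ t in (-Real.pi)..Real.pi, G (t + φ)‖
      ≤ ∫ t in (-Real.pi)..Real.pi, (M * Real.pi) * |t| ^ (α - 1) := by
    apply intervalIntegral.norm_integral_le_of_norm_le (by linarith)
    · refine Filter.Eventually.of_forall fun t ht => ?_
      have ht' : |t| ≤ Real.pi := abs_le.2 ⟨ht.1.le, ht.2⟩
      rcases eq_or_ne t 0 with rfl | h0
      · simp only [hG, ha, zero_add, sub_self, ofReal_zero, zero_mul, norm_zero]
        positivity
      · have hp : 0 < |t| := abs_pos.2 h0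
        have hl := hφ t ht'
        have hz : 0 < ‖circleMap 0 1 (t + φ) - w‖ := norm_pos_iff.2 (hne _)
        have hh := hH (t + φ) φ
        rw [add_sub_cancel_right] at hh
        simp only [hG]
        rw [norm_mul, Complex.norm_real, norm_inv, Real.norm_eq_abs, ← div_eq_mul_inv,
          div_le_iff₀ hz, Real.rpow_sub_one hp.ne']
        refine hh.trans ?_
        have : M * |t| ^ α = M * (|t| ^ α / |t|) * |t| := by field_simp
        rw [this]
        calc M * (|t| ^ α / |t|) * |t|
            ≤ M * (|t| ^ α / |t|) * (Real.pi * ‖circleMap 0 1 (t + φ) - w‖) := by gcongr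
          _ = _ := by ring
    · exact (gb_abs_rpow α hα).1.const_mul _
  rw [intervalIntegral.integral_const_mul, (gb_abs_rpow α hα).2, ← hshift, hGint] at hbound
  rw [sub_eq_zero.1 ibp, norm_mul] at hbound
  rw [Real.circleAverage_def, norm_smul]
  simp only [smul_eq_mul, hF]
  have hI : ‖I / 2‖ = 1 / 2 := by simp
  rw [hI] at hbound
  rw [norm_inv, Real.norm_of_nonneg (by positivity), inv_mul_le_iff₀ (by positivity)]
  calc _ ≤ 2 * (M * Real.pi * (2 * (Real.pi ^ α / α))) := by linarith
    _ = _ := by ring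

lemma gb_fderiv (α : ℝ) (hα : 0 < α) (M : ℝ) (ψ : ℝ → ℝ)
    (hper : Function.Periodic ψ (2 * Real.pi)) (hC : ContDiff ℝ 1 ψ)
    (hH : ∀ s t : ℝ, |deriv ψ s - deriv ψ t| ≤ M * |s - t| ^ α)
    (f : ℂ → ℝ) (hf : InnerProductSpace.HarmonicContOnCl f (ball 0 1))
    (hF : ∀ θ : ℝ, f (circleMap 0 1 θ) = ψ θ) (w : ℂ) (hw : ‖w‖ < 1) (v : ℂ) :
    |fderiv ℝ f w v| ≤ 2 * M * Real.pi ^ α / α * ‖v‖ := by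
  have hk := gb_key α hα M ψ hper hC hH (fun z => (f z : ℂ)) (fun θ => by rw [hF]) w hw
  have hfc : Continuous (fun θ : ℝ => (f (circleMap 0 1 θ) : ℂ)) := by
    simp only [hF]
    exact Complex.continuous_ofReal.comp hC.continuous
  have hci : CircleIntegrable (fun z => (f z : ℂ)) 0 1 := hfc.intervalIntegrable _ _
  have hd := hasDerivAt_circleAverage_herglotzRieszKernel_smul hci (w := w) (by simpa using hw)
  have hev : f =ᶠ[nhds w] fun w => (Real.circleAverage
      (fun ζ => herglotzRieszKernel 0 w ζ • (f ζ : ℂ)) 0 1).re := by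
    filter_upwards [isOpen_ball.mem_nhds (show w ∈ ball (0 : ℂ) 1 by simpa using hw)] with z hz
    have hzn : ‖z‖ < 1 := by simpa using hz
    rw [← hf.circleAverage_re_herglotzRieszKernel_smul hz]
    have := Complex.reCLM.circleAverage_comp_comm (c := 0) (R := 1)
      (f := fun ζ => herglotzRieszKernel 0 z ζ • (f ζ : ℂ)) (by
        apply Continuous.intervalIntegrable
        simp only [herglotzRieszKernel_def, sub_zero]
        exact (((continuous_circleMap 0 1).add continuous_const).div
          ((continuous_circleMap 0 1).sub continuous_const) (gb_ne z hzn)).smul hfc)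
    rw [Complex.reCLM_apply] at this
    rw [← this]
    congr 1
    funext ζ
    simp
  have hfd := hev.fderiv_eq (𝕜 := ℝ)
  have hr : HasFDerivAt (𝕜 := ℝ) _ _ w :=
    Complex.reCLM.hasFDerivAt.comp w (hd.hasFDerivAt.restrictScalars ℝ)
  have : fderiv ℝ f w v = (v * Real.circleAverage
      (fun ζ => (2 * ζ / (ζ - w) ^ 2) • (f ζ : ℂ)) 0 1).re := by
    rw [hfd]
    have := hr.fderiv
    simp only [Function.comp_def, Complex.reCLM_apply] at this
    rw [this]
    simp
  rw [this]
  refine (Complex.abs_re_le_norm _).trans ?_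
  rw [norm_mul, mul_comm]
  gcongr

lemma gb_laplacian (Φ : EuclideanSpace ℝ (Fin 2) → ℝ) (z : ℂ)
    (h : ContDiffAt ℝ 2 Φ (Complex.orthonormalBasisOneI.repr z)) :
    Laplacian.laplacian (Φ ∘ Complex.orthonormalBasisOneI.repr) z
      = laplacian2 Φ (Complex.orthonormalBasisOneI.repr z) := by
  set e : ℂ ≃L[ℝ] EuclideanSpace ℝ (Fin 2) :=
    Complex.orthonormalBasisOneI.repr.toContinuousLinearEquiv with he
  have hee : (Φ ∘ Complex.orthonormalBasisOneI.repr) = Φ ∘ e := rfl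
  have hez : Complex.orthonormalBasisOneI.repr z = e z := rfl
  rw [hez] at h ⊢
  rw [hee]
  have hcd : ContDiffAt ℝ 2 (Φ ∘ e) z := h.comp z e.contDiff.contDiffAt
  have hdd : DifferentiableAt ℝ (fderiv ℝ (Φ ∘ e)) z :=
    (hcd.fderiv_right (m := 1) (by norm_num)).differentiableAt one_ne_zero
  have key : ∀ v : ℂ, fderiv ℝ (fderiv ℝ (Φ ∘ e)) z v v =
      fderiv ℝ (fun y => fderiv ℝ Φ y (e v)) (e z) (e v) := by
    intro v
    have h1 : fderiv ℝ (fun y => fderiv ℝ (Φ ∘ e) y v) z v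
        = fderiv ℝ (fderiv ℝ (Φ ∘ e)) z v v := by
      rw [fderiv_clm_apply hdd (by fun_prop)]
      simp
    rw [← h1]
    have h2 : (fun y => fderiv ℝ (Φ ∘ e) y v) = (fun y => fderiv ℝ Φ y (e v)) ∘ e := by
      funext y
      rw [e.comp_right_fderiv]
      rfl
    rw [h2, e.comp_right_fderiv]
    rfl
  have e1 : e 1 = EuclideanSpace.single 0 1 := by
    change Complex.orthonormalBasisOneI.repr 1 = _
    ext i; fin_cases i <;> simp
  have eI : e I = EuclideanSpace.single 1 1 := by
    change Complex.orthonormalBasisOneI.repr I = _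
    ext i; fin_cases i <;> simp
  rw [InnerProductSpace.laplacian_eq_iteratedFDeriv_complexPlane]
  simp only [iteratedFDeriv_two_apply, Matrix.cons_val_zero, Matrix.cons_val_one, key,
    e1, eI, laplacian2, Fin.sum_univ_two]

/-- The gradient of the harmonic extension of `C^{1,α}` boundary data is uniformly bounded
on the unit disk, with a constant depending only on `α`, `‖ψ‖_∞`, `‖ψ′‖_∞` and the
`α`-Hölder seminorm of `ψ′`. -/
theorem gradient_bound_for_harmonic_extension
    (α : ℝ) (hα : 0 < α) (hα1 : α < 1) (M₀ M₁ M₂ : ℝ) :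
    ∃ C > 0, ∀ (ψ : ℝ → ℝ) (Φ : EuclideanSpace ℝ (Fin 2) → ℝ),
      Function.Periodic ψ (2 * Real.pi) →
      ContDiff ℝ 1 ψ →
      (∀ t : ℝ, |ψ t| ≤ M₀) →
      (∀ t : ℝ, |deriv ψ t| ≤ M₁) →
      (∀ s t : ℝ, |deriv ψ s - deriv ψ t| ≤ M₂ * |s - t| ^ α) →
      ContinuousOn Φ {x : EuclideanSpace ℝ (Fin 2) | ‖x‖ ≤ 1} →
      ContDiffOn ℝ 2 Φ {x : EuclideanSpace ℝ (Fin 2) | ‖x‖ < 1} →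
      (∀ x : EuclideanSpace ℝ (Fin 2), ‖x‖ < 1 → laplacian2 Φ x = 0) →
      (∀ θ : ℝ, Φ (circlePoint θ) = ψ θ) →
      ∀ x : EuclideanSpace ℝ (Fin 2), ‖x‖ < 1 → ‖gradient Φ x‖ ≤ C := by
  have hpi := Real.pi_pos
  refine ⟨2 * |M₂| * Real.pi ^ α / α + 1, by positivity, ?_⟩
  intro ψ Φ hper hC _ _ hH hcont hcd hlap hbd x hx
  have hM : 0 ≤ M₂ := by
    have := (abs_nonneg _).trans (hH 1 0)
    simpa using this
  rw [abs_of_nonneg hM]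
  have hopen : IsOpen {x : EuclideanSpace ℝ (Fin 2) | ‖x‖ < 1} :=
    isOpen_lt continuous_norm continuous_const
  have hcda : ∀ z : ℂ, ‖z‖ < 1 → ContDiffAt ℝ 2 Φ (Complex.orthonormalBasisOneI.repr z) :=
    fun z hz => hcd.contDiffAt (hopen.mem_nhds (by simpa using hz))
  set L := Complex.orthonormalBasisOneI.repr with hL
  have hharm : InnerProductSpace.HarmonicContOnCl (Φ ∘ L) (ball 0 1) := by
    apply InnerProductSpace.HarmonicContOnCl.mk_ball
    · intro z hz
      refine ⟨(hcda z (by simpa using hz)).comp z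
        L.toContinuousLinearEquiv.contDiff.contDiffAt, ?_⟩
      filter_upwards [isOpen_ball.mem_nhds hz] with y hy
      have hy' : ‖y‖ < 1 := by simpa using hy
      rw [gb_laplacian Φ y (hcda y hy'), hlap _ (by simpa using hy')]
      rfl
    · apply hcont.comp L.continuous.continuousOn
      intro z hz
      simpa using hz
  have hbd' : ∀ θ : ℝ, (Φ ∘ L) (circleMap 0 1 θ) = ψ θ := by
    intro θ
    rw [← hbd θ, Function.comp_apply]
    congr 1
    ext i
    fin_cases i <;>
      simp [hL, circlePoint, circleMap, Complex.exp_ofReal_mul_I_re, Complex.exp_ofReal_mul_I_im]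
  rw [gradient, LinearIsometryEquiv.norm_map]
  have hC0 : 0 ≤ 2 * M₂ * Real.pi ^ α / α := by positivity
  suffices ‖fderiv ℝ Φ x‖ ≤ 2 * M₂ * Real.pi ^ α / α by linarith
  apply ContinuousLinearMap.opNorm_le_bound _ hC0
  intro v
  have := gb_fderiv α hα M₂ ψ hper hC hH (Φ ∘ L) hharm hbd' (L.symm x) (by simpa using hx)
    (L.symm v)
  have h2 : fderiv ℝ (Φ ∘ L) (L.symm x) (L.symm v) = fderiv ℝ Φ x v := by
    have h3 := L.toContinuousLinearEquiv.comp_right_fderiv (f := Φ) (x := L.symm x)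
    have h4 : (Φ ∘ L) = Φ ∘ L.toContinuousLinearEquiv := rfl
    rw [h4, h3]
    simp
  rw [h2] at this
  simpa using this
end

section
/- Let n ≥ 3 be an integer, Ω = {x ∈ ℝⁿ : ‖x‖ > 1}, and Φ(x) = ‖x‖^{2-n}. For each λ > 0 define v_λ(t,x) = e^{-λt} ∇Φ(x) and p_λ(t,x) = λ e^{-λt} Φ(x) - ½ e^{-2λt} ‖∇Φ(x)‖². Then: (a) for every t ∈ ℝ and x ∈ Ω, (v_λ, p_λ) satisfies the Navier–Stokes equations pointwise, i.e. ∂ₜv_λ + (v_λ·∇)v_λ - Δv_λ = -∇ₓp_λ and divₓ v_λ = 0; (b) all these solutions share the same initial data v_λ(0,·) = ∇Φ, yet v_λ ≠ v_μ for λ ≠ μ; (c) for each λ > 0 the kinetic energy t ↦ ∫_Ω ‖v_λ(t,x)‖² dx = e^{-2λt} ∫_Ω ‖∇Φ(x)‖² dx is finite and strictly decreasing on [0, ∞). In particular, there are infinitely many classical solutions of the Navier–Stokes equations on Ω with the same initial data and nonincreasing energy. -/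
open MeasureTheory Real
open scoped BigOperators

/-- The Laplacian of a scalar function on `ℝⁿ`, `ΔΦ = Σᵢ ∂²Φ/∂xᵢ²`. -/
noncomputable def laplacian {n : ℕ} (f : EuclideanSpace ℝ (Fin n) → ℝ)
    (x : EuclideanSpace ℝ (Fin n)) : ℝ :=
  ∑ i : Fin n,
    fderiv ℝ (fun y => fderiv ℝ f y (EuclideanSpace.single i 1)) x (EuclideanSpace.single i 1)

/-- The divergence of a vector field on `ℝⁿ`, `div v = Σᵢ ∂vᵢ/∂xᵢ`. -/
noncomputable def vectorDiv {n : ℕ}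
    (v : EuclideanSpace ℝ (Fin n) → EuclideanSpace ℝ (Fin n))
    (x : EuclideanSpace ℝ (Fin n)) : ℝ :=
  ∑ i : Fin n, fderiv ℝ v x (EuclideanSpace.single i 1) i

/-- The componentwise Laplacian of a vector field on `ℝⁿ`. -/
noncomputable def vectorLaplacian {n : ℕ}
    (v : EuclideanSpace ℝ (Fin n) → EuclideanSpace ℝ (Fin n))
    (x : EuclideanSpace ℝ (Fin n)) : EuclideanSpace ℝ (Fin n) :=
  ∑ i : Fin n, EuclideanSpace.single i (laplacian (fun y => v y i) x)

theorem nsx_norm_rpow {E : Type*} [NormedAddCommGroup E] [InnerProductSpace ℝ E] (a : ℝ) {x : E}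
    (hx : x ≠ 0) :
    HasFDerivAt (fun y : E => ‖y‖ ^ a) ((a * ‖x‖ ^ (a - 2)) • innerSL ℝ x) x := by
  have hr : 0 < ‖x‖ := norm_pos_iff.mpr hx
  have h := (hasStrictFDerivAt_norm_sq x).hasFDerivAt.rpow_const (p := a / 2)
    (Or.inl (by positivity))
  have e : ∀ (y : E) (b : ℝ), (‖y‖ ^ 2) ^ b = ‖y‖ ^ (2 * b) := fun y b => by
    rw [← Real.rpow_natCast, ← Real.rpow_mul (norm_nonneg y)]; norm_num
  simp only [e] at h
  rw [show 2 * (a / 2) = a by ring, show 2 * (a / 2 - 1) = a - 2 by ring] at h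
  convert h using 1
  ext z
  simp
  ring

theorem nsx_field {E : Type*} [NormedAddCommGroup E] [InnerProductSpace ℝ E] (k b : ℝ) {x : E}
    (hx : x ≠ 0) :
    HasFDerivAt (fun y : E => (k * ‖y‖ ^ b) • y)
      ((k * ‖x‖ ^ b) • ContinuousLinearMap.id ℝ E +
        ((k * b * ‖x‖ ^ (b - 2)) • innerSL ℝ x).smulRight x) x := by
  refine (((nsx_norm_rpow b hx).const_mul k).smul (hasFDerivAt_id x)).congr_fderiv ?_
  ext z
  simp [mul_assoc]

theorem nsx_gradient {E : Type*} [NormedAddCommGroup E] [InnerProductSpace ℝ E] [CompleteSpace E]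
    (a : ℝ) {x : E} (hx : x ≠ 0) :
    HasGradientAt (fun y : E => ‖y‖ ^ a) ((a * ‖x‖ ^ (a - 2)) • x) x := by
  rw [hasGradientAt_iff_hasFDerivAt]
  refine (nsx_norm_rpow a hx).congr_fderiv ?_
  ext z
  simp

theorem nsx_ev {E : Type*} [NormedAddCommGroup E] {x : E} (hx : x ≠ 0) :
    ∀ᶠ y in nhds x, y ≠ 0 := isOpen_ne.mem_nhds hx

theorem nsx_rp {r : ℝ} (hr : 0 < r) (b : ℝ) : r ^ b = r ^ (b - 2) * r ^ 2 := by
  rw [← Real.rpow_natCast r 2, ← Real.rpow_add hr]; norm_num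

theorem nsx_div {n : ℕ} (k : ℝ) {x : EuclideanSpace ℝ (Fin n)} (hx : x ≠ 0) :
    vectorDiv (fun y => (k * ‖y‖ ^ (-(n : ℝ))) • y) x = 0 := by
  have hr : 0 < ‖x‖ := norm_pos_iff.mpr hx
  unfold vectorDiv
  rw [(nsx_field k (-(n : ℝ)) hx).fderiv]
  have h2 := EuclideanSpace.real_norm_sq_eq x
  have : ∀ i : Fin n, (((k * ‖x‖ ^ (-(n : ℝ))) • ContinuousLinearMap.id ℝ (EuclideanSpace ℝ (Fin n)) +
        ((k * (-(n : ℝ)) * ‖x‖ ^ ((-(n : ℝ)) - 2)) • innerSL ℝ x).smulRight x)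
        (EuclideanSpace.single i 1)) i = k * ‖x‖ ^ (-(n : ℝ)) +
        k * (-(n : ℝ)) * ‖x‖ ^ ((-(n : ℝ)) - 2) * (x i) ^ 2 := by
    intro i
    simp [EuclideanSpace.inner_single_right]
    ring
  rw [Finset.sum_congr rfl fun i _ => this i, Finset.sum_add_distrib, Finset.sum_const, ← Finset.mul_sum, ← h2,
    nsx_rp hr (-(n : ℝ))]
  simp
  ring

theorem nsx_partial {n : ℕ} (k b : ℝ) (i j : Fin n) {x : EuclideanSpace ℝ (Fin n)} (hx : x ≠ 0) :
    fderiv ℝ (fun y : EuclideanSpace ℝ (Fin n) => ((k * ‖y‖ ^ b) • y) i) x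
      (EuclideanSpace.single j 1) =
    (if i = j then k else 0) * ‖x‖ ^ b + (k * b) * (‖x‖ ^ (b - 2) * (x i * x j)) := by
  have h := (EuclideanSpace.proj (𝕜 := ℝ) i).hasFDerivAt.comp x (nsx_field k b hx)
  have h' : HasFDerivAt (fun y : EuclideanSpace ℝ (Fin n) => ((k * ‖y‖ ^ b) • y) i) _ x := h
  rw [h'.fderiv]
  simp [EuclideanSpace.inner_single_right]
  ring

theorem nsx_partial2 {n : ℕ} (k b : ℝ) (i j : Fin n) {x : EuclideanSpace ℝ (Fin n)} (hx : x ≠ 0) :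
    fderiv ℝ (fun z => fderiv ℝ (fun y : EuclideanSpace ℝ (Fin n) => ((k * ‖y‖ ^ b) • y) i) z
      (EuclideanSpace.single j 1)) x (EuclideanSpace.single j 1) =
    (if i = j then 2 * k * b * ‖x‖ ^ (b - 2) * x j else 0) + k * b * ‖x‖ ^ (b - 2) * x i
      + k * b * (b - 2) * ‖x‖ ^ (b - 2 - 2) * x i * (x j) ^ 2 := by
  have e : (fun z => fderiv ℝ (fun y : EuclideanSpace ℝ (Fin n) => ((k * ‖y‖ ^ b) • y) i) z
      (EuclideanSpace.single j 1)) =ᶠ[nhds x] fun z =>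
      (if i = j then k else 0) * ‖z‖ ^ b + (k * b) * (‖z‖ ^ (b - 2) * (z i * z j)) := by
    filter_upwards [nsx_ev hx] with z hz using nsx_partial k b i j hz
  rw [e.fderiv_eq]
  have hi : HasFDerivAt (fun z : EuclideanSpace ℝ (Fin n) => z i)
      (EuclideanSpace.proj (𝕜 := ℝ) i : EuclideanSpace ℝ (Fin n) →L[ℝ] ℝ) x :=
    (EuclideanSpace.proj (𝕜 := ℝ) i).hasFDerivAt
  have hj : HasFDerivAt (fun z : EuclideanSpace ℝ (Fin n) => z j)
      (EuclideanSpace.proj (𝕜 := ℝ) j : EuclideanSpace ℝ (Fin n) →L[ℝ] ℝ) x :=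
    (EuclideanSpace.proj (𝕜 := ℝ) j).hasFDerivAt
  have h : HasFDerivAt (fun z : EuclideanSpace ℝ (Fin n) =>
      (if i = j then k else 0) * ‖z‖ ^ b + (k * b) * (‖z‖ ^ (b - 2) * (z i * z j))) _ x :=
    ((nsx_norm_rpow b hx).const_mul (if i = j then k else 0)).add
    (((nsx_norm_rpow (b - 2) hx).mul (hi.mul hj)).const_mul (k * b))
  rw [h.fderiv]
  by_cases hij : i = j
  · subst hij
    simp [EuclideanSpace.inner_single_right]
    ring
  · simp [EuclideanSpace.inner_single_right, hij]
    ring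

theorem nsx_lap {n : ℕ} (k : ℝ) {x : EuclideanSpace ℝ (Fin n)} (hx : x ≠ 0) :
    vectorLaplacian (fun y => (k * ‖y‖ ^ (-(n : ℝ))) • y) x = 0 := by
  have hr : 0 < ‖x‖ := norm_pos_iff.mpr hx
  unfold vectorLaplacian
  refine Finset.sum_eq_zero fun i _ => ?_
  have : laplacian (fun y : EuclideanSpace ℝ (Fin n) => ((k * ‖y‖ ^ (-(n : ℝ))) • y) i) x = 0 := by
    unfold laplacian
    rw [Finset.sum_congr rfl fun j _ => nsx_partial2 k (-(n : ℝ)) i j hx]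
    rw [Finset.sum_add_distrib, Finset.sum_add_distrib, Finset.sum_const, ← Finset.mul_sum,
      ← EuclideanSpace.real_norm_sq_eq, nsx_rp hr (-(n : ℝ) - 2)]
    simp
    ring
  rw [this]
  simp

theorem nsx_lap_congr {n : ℕ} {f g : EuclideanSpace ℝ (Fin n) → EuclideanSpace ℝ (Fin n)}
    {x : EuclideanSpace ℝ (Fin n)} (h : f =ᶠ[nhds x] g) :
    vectorLaplacian f x = vectorLaplacian g x := by
  unfold vectorLaplacian laplacian
  refine Finset.sum_congr rfl fun i _ => ?_
  congr 1
  refine Finset.sum_congr rfl fun j _ => ?_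
  have h1 : (fun y => f y i) =ᶠ[nhds x] fun y => g y i := h.fun_comp (fun w => w i)
  have h2 := h1.fderiv (𝕜 := ℝ)
  have h3 : (fun y => fderiv ℝ (fun y => f y i) y (EuclideanSpace.single j 1)) =ᶠ[nhds x]
      fun y => fderiv ℝ (fun y => g y i) y (EuclideanSpace.single j 1) :=
    h2.fun_comp (fun L => L (EuclideanSpace.single j 1))
  rw [h3.fderiv_eq]

/-- On the exterior domain `Ω = {‖x‖ > 1} ⊆ ℝⁿ`, `n ≥ 3`, with `Φ(x) = ‖x‖^(2-n)`, the
fields `v_λ(t,x) = e^{-λt}∇Φ(x)`, `p_λ(t,x) = λe^{-λt}Φ(x) - ½e^{-2λt}‖∇Φ(x)‖²` give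
infinitely many classical Navier–Stokes solutions with the same initial data `∇Φ` and
finite, strictly decreasing kinetic energy `e^{-2λt}∫_Ω ‖∇Φ‖²`. -/
theorem nonunique_navier_stokes_exterior_domain {n : ℕ} (hn : 3 ≤ n)
    (Ω : Set (EuclideanSpace ℝ (Fin n)))
    (hΩ : Ω = {x : EuclideanSpace ℝ (Fin n) | 1 < ‖x‖})
    (Φ : EuclideanSpace ℝ (Fin n) → ℝ)
    (hΦdef : ∀ x, Φ x = ‖x‖ ^ ((2 : ℝ) - n))
    (v : ℝ → ℝ → EuclideanSpace ℝ (Fin n) → EuclideanSpace ℝ (Fin n))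
    (hv : ∀ lam t x, v lam t x = Real.exp (-lam * t) • gradient Φ x)
    (p : ℝ → ℝ → EuclideanSpace ℝ (Fin n) → ℝ)
    (hp : ∀ lam t x, p lam t x =
      lam * Real.exp (-lam * t) * Φ x
        - (1 / 2 : ℝ) * Real.exp (-2 * lam * t) * ‖gradient Φ x‖ ^ 2) :
    -- (a) each `(v_λ, p_λ)` solves the Navier–Stokes equations pointwise on `ℝ × Ω`
    (∀ lam : ℝ, 0 < lam → ∀ t : ℝ, ∀ x ∈ Ω,
      (deriv (fun s => v lam s x) t + fderiv ℝ (v lam t) x (v lam t x)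
          - vectorLaplacian (v lam t) x = - gradient (p lam t) x) ∧
      vectorDiv (v lam t) x = 0) ∧
    -- (b) common initial data, yet pairwise distinct solutions
    ((∀ lam : ℝ, 0 < lam → ∀ x, v lam 0 x = gradient Φ x) ∧
      (∀ lam mu : ℝ, 0 < lam → 0 < mu → lam ≠ mu → v lam ≠ v mu)) ∧
    -- (c) finite kinetic energy, equal to `e^{-2λt}∫_Ω ‖∇Φ‖²`, strictly decreasing in time
    (∀ lam : ℝ, 0 < lam →
      (∀ t : ℝ, IntegrableOn (fun x => ‖v lam t x‖ ^ 2) Ω volume) ∧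
      (∀ t : ℝ, (∫ x in Ω, ‖v lam t x‖ ^ 2)
        = Real.exp (-2 * lam * t) * ∫ x in Ω, ‖gradient Φ x‖ ^ 2) ∧
      StrictAntiOn (fun t => ∫ x in Ω, ‖v lam t x‖ ^ 2) (Set.Ici (0 : ℝ))) := by
  have hgrad : ∀ x : EuclideanSpace ℝ (Fin n), x ≠ 0 →
      gradient Φ x = (((2 : ℝ) - n) * ‖x‖ ^ (-(n : ℝ))) • x := by
    intro x hx
    rw [show Φ = fun y => ‖y‖ ^ ((2 : ℝ) - n) from funext hΦdef, (nsx_gradient _ hx).gradient]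
    congr 3
    ring
  have hnorm : ∀ x : EuclideanSpace ℝ (Fin n), x ≠ 0 →
      ‖gradient Φ x‖ ^ 2 = ((2 : ℝ) - n) ^ 2 * ‖x‖ ^ (2 - 2 * (n : ℝ)) := by
    intro x hx
    have hr : 0 < ‖x‖ := norm_pos_iff.mpr hx
    rw [hgrad x hx, norm_smul, mul_pow, Real.norm_eq_abs, sq_abs, mul_pow, mul_assoc]
    congr 1
    rw [← Real.rpow_natCast, ← Real.rpow_natCast, ← Real.rpow_mul hr.le, ← Real.rpow_add hr]
    congr 1
    push_cast
    ring
  have hn3 : (3 : ℝ) ≤ n := by exact_mod_cast hn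
  have hne : ∀ x ∈ Ω, x ≠ 0 := by
    rintro x hx rfl
    rw [hΩ] at hx
    simp at hx
    linarith
  have hopen : IsOpen Ω := by
    rw [hΩ]; exact isOpen_lt continuous_const continuous_norm
  have hvsq : ∀ lam t x, ‖v lam t x‖ ^ 2 = Real.exp (-2 * lam * t) * ‖gradient Φ x‖ ^ 2 := by
    intro lam t x
    rw [hv, norm_smul, mul_pow, Real.norm_eq_abs, sq_abs, ← Real.exp_nat_mul]
    congr 2
    push_cast
    ring
  have hint : IntegrableOn (fun x => ‖gradient Φ x‖ ^ 2) Ω volume := by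
    have h1 : Integrable (fun x : EuclideanSpace ℝ (Fin n) => (1 + ‖x‖) ^ (-(2 * (n : ℝ) - 2)))
        volume := integrable_one_add_norm (by rw [finrank_euclideanSpace_fin]; linarith)
    have h2 : IntegrableOn (fun x : EuclideanSpace ℝ (Fin n) =>
        ((2 : ℝ) - n) ^ 2 * ‖x‖ ^ (2 - 2 * (n : ℝ))) Ω volume := by
      refine Integrable.mono' ((h1.const_mul
        (((2 : ℝ) - n) ^ 2 * (2 : ℝ) ^ (2 * (n : ℝ) - 2))).integrableOn) ?_ ?_
      · exact (Measurable.aestronglyMeasurable (by fun_prop))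
      · filter_upwards [ae_restrict_mem hopen.measurableSet] with x hx
        rw [hΩ] at hx
        have hx1 : 1 < ‖x‖ := hx
        rw [Real.norm_of_nonneg (by positivity), mul_assoc]
        gcongr
        have h3 : (2 * ‖x‖) ^ (-(2 * (n : ℝ) - 2)) ≤ (1 + ‖x‖) ^ (-(2 * (n : ℝ) - 2)) :=
          Real.rpow_le_rpow_of_nonpos (by positivity) (by linarith) (by linarith)
        have h4 : ‖x‖ ^ (2 - 2 * (n : ℝ)) =
            (2 : ℝ) ^ (2 * (n : ℝ) - 2) * (2 * ‖x‖) ^ (-(2 * (n : ℝ) - 2)) := by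
          rw [Real.mul_rpow (by norm_num) (by positivity), ← mul_assoc,
            ← Real.rpow_add (by norm_num)]
          simp
        rw [h4]
        gcongr
    exact h2.congr_fun (fun x hx => (hnorm x (hne x hx)).symm) hopen.measurableSet
  have hgne : ∀ x : EuclideanSpace ℝ (Fin n), x ≠ 0 → gradient Φ x ≠ 0 := by
    intro x hx
    rw [hgrad x hx]
    have hr : 0 < ‖x‖ := norm_pos_iff.mpr hx
    exact smul_ne_zero (mul_ne_zero (by linarith) (by positivity)) hx
  let x0 : EuclideanSpace ℝ (Fin n) := EuclideanSpace.single ⟨0, by omega⟩ 2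
  have hx0 : x0 ∈ Ω := by
    rw [hΩ]
    simp [x0]
  have hpos : 0 < ∫ x in Ω, ‖gradient Φ x‖ ^ 2 := by
    rw [setIntegral_pos_iff_support_of_nonneg_ae
      (Filter.Eventually.of_forall fun x => by positivity) hint]
    refine (hopen.measure_pos volume ⟨x0, hx0⟩).trans_le (measure_mono fun x hx => ⟨?_, hx⟩)
    have := hgne x (hne x hx)
    simpa using this
  have hE : ∀ lam t : ℝ, (∫ x in Ω, ‖v lam t x‖ ^ 2)
        = Real.exp (-2 * lam * t) * ∫ x in Ω, ‖gradient Φ x‖ ^ 2 := by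
    intro lam t
    simp only [hvsq]
    exact integral_const_mul _ _
  refine ⟨?_, ⟨?_, ?_⟩, ?_⟩
  · intro lam hlam t x hx
    have hx' := hne x hx
    have hr : 0 < ‖x‖ := norm_pos_iff.mpr hx'
    set k : ℝ := Real.exp (-lam * t) * ((2 : ℝ) - n) with hk
    have hev : v lam t =ᶠ[nhds x] fun y => (k * ‖y‖ ^ (-(n : ℝ))) • y := by
      filter_upwards [nsx_ev hx'] with y hy
      rw [hv, hgrad y hy, smul_smul, hk, mul_assoc]
    constructor
    · rw [nsx_lap_congr hev, nsx_lap k hx', hev.fderiv_eq, (nsx_field k _ hx').fderiv,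
        hev.eq_of_nhds]
      have hd : deriv (fun s => v lam s x) t = (-lam * Real.exp (-lam * t)) • gradient Φ x := by
        simp only [hv]
        have h0 : HasDerivAt (fun s : ℝ => Real.exp (-lam * s)) (Real.exp (-lam * t) * (-lam * 1)) t :=
          ((hasDerivAt_id t).const_mul (-lam)).exp
        rw [(h0.smul_const (gradient Φ x)).deriv]
        congr 1
        ring
      have hpe : p lam t =ᶠ[nhds x] fun y => lam * Real.exp (-lam * t) * ‖y‖ ^ ((2 : ℝ) - n) -
          (1 / 2 : ℝ) * k ^ 2 * ‖y‖ ^ (2 - 2 * (n : ℝ)) := by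
        filter_upwards [nsx_ev hx'] with y hy
        rw [hp, hΦdef, hnorm y hy, hk, mul_pow, ← Real.exp_nat_mul,
          show -2 * lam * t = ((2 : ℕ) : ℝ) * (-lam * t) by push_cast; ring]
        ring
      have hgp : HasGradientAt (p lam t)
          ((lam * Real.exp (-lam * t) * (((2 : ℝ) - n) * ‖x‖ ^ ((2 : ℝ) - n - 2)) -
          (1 / 2 : ℝ) * k ^ 2 * ((2 - 2 * (n : ℝ)) * ‖x‖ ^ (2 - 2 * (n : ℝ) - 2))) • x) x := by
        rw [hasGradientAt_iff_hasFDerivAt]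
        refine HasFDerivAt.congr_of_eventuallyEq ?_ hpe
        refine (((nsx_norm_rpow _ hx').const_mul _).sub
          ((nsx_norm_rpow _ hx').const_mul _)).congr_fderiv ?_
        ext z
        simp
        ring
      rw [hd, hgp.gradient, hgrad x hx']
      have e1 : ‖x‖ ^ ((2 : ℝ) - n - 2) = ‖x‖ ^ (-(n : ℝ)) := by congr 1; ring
      have e2 : ‖x‖ ^ (2 - 2 * (n : ℝ) - 2) = ‖x‖ ^ (-(n : ℝ)) * ‖x‖ ^ (-(n : ℝ)) := by
        rw [← Real.rpow_add hr]; congr 1; ring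
      have e3 := nsx_rp hr (-(n : ℝ))
      rw [e1, e2]
      simp only [add_apply, smul_apply, ContinuousLinearMap.id_apply,
        ContinuousLinearMap.smulRight_apply, innerSL_apply_apply, inner_smul_right,
        real_inner_self_eq_norm_sq, sub_zero, smul_smul, ← add_smul, ← neg_smul, smul_eq_mul]
      congr 1
      generalize ‖x‖ ^ (-(n : ℝ) - 2) = q at *
      rw [e3]
      ring
    · have : vectorDiv (v lam t) x = vectorDiv (fun y => (k * ‖y‖ ^ (-(n : ℝ))) • y) x := by
        unfold vectorDiv
        rw [hev.fderiv_eq]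
      rw [this, nsx_div k hx']
  · intro lam _ x
    rw [hv]
    simp
  · intro lam mu _ _ hne' h
    have h1 : v lam 1 x0 = v mu 1 x0 := by rw [h]
    rw [hv, hv] at h1
    have h2 := smul_left_injective ℝ (hgne x0 (hne x0 hx0)) h1
    have h3 := Real.exp_injective h2
    apply hne'
    linarith
  · intro lam hlam
    refine ⟨fun t => ?_, hE lam, ?_⟩
    · simp only [hvsq]
      exact hint.const_mul _
    · intro s _ t _ hst
      simp only [hE]
      refine mul_lt_mul_of_pos_right (Real.exp_lt_exp.mpr ?_) hpos
      nlinarith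
end
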